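/- For all integers n ≥ 2 and k ≥ 1, ||R_{k,n} − C_{k,n}|| = Σ_{t=1}^{n−2} (B_{t+1}/k^t)·( (n)_t/t! + (n−1)_t/(t+1)! ) + (n+1)·B_n/k^{n−1}. -/

import Mathlib

/-- Number of descents of a permutation of `{1,...,n}` (here `Fin n`, 0-indexed):
the number of positions `i` with `1 ≤ i ≤ n-1` and `π(i) > π(i+1)`. -/
def numDescents (n : ℕ) (π : Equiv.Perm (Fin n)) : ℕ :=
  ((Finset.range (n - 1)).filter (fun i =>
    ∃ h : i + 1 < n, π ⟨i + 1, h⟩ < π ⟨i, Nat.lt_of_succ_lt h⟩)).card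

/-- `π` has a cyclic descent at `n` if `π(n) > π(1)`. -/
def hasCyclicDescentAtLast (n : ℕ) (π : Equiv.Perm (Fin n)) : Prop :=
  ∃ h : 0 < n, π ⟨0, h⟩ < π ⟨n - 1, Nat.sub_lt h Nat.one_pos⟩

instance (n : ℕ) (π : Equiv.Perm (Fin n)) : Decidable (hasCyclicDescentAtLast n π) :=
  exists_prop_decidable _

/-- Number of cyclic descents: `d(π)+1` if `π` has a cyclic descent at `n`, else `d(π)`. -/
def numCyclicDescents (n : ℕ) (π : Equiv.Perm (Fin n)) : ℕ :=
  numDescents n π + if hasCyclicDescentAtLast n π then 1 else 0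

/-- The k-riffle shuffle measure `R_{k,n}(π) = binom(n+k-d(π)-1, n) / k^n`. -/
noncomputable def riffle (k n : ℕ) (π : Equiv.Perm (Fin n)) : ℝ :=
  (Nat.choose (n + k - numDescents n π - 1) n : ℝ) / (k : ℝ) ^ n

/-- The cut-then-k-riffle-shuffle measure
`C_{k,n}(π) = binom(n+k-cd(π)-1, n-1) / (n·k^(n-1))`. -/
noncomputable def cutRiffle (k n : ℕ) (π : Equiv.Perm (Fin n)) : ℝ :=
  (Nat.choose (n + k - numCyclicDescents n π - 1) (n - 1) : ℝ) / ((n : ℝ) * (k : ℝ) ^ (n - 1))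

/-!
Let `n` be the size of the deck. Pascal's rule gives
`R(π) - C(π) = C(π) (n [π(n) > π(1)] - cd(π)) / k`, whose sign is visible because `cd(π) < n`.
Rotating the positions of `π` changes neither `cd(π)` nor `C(π)`, and exactly `cd(π)` of the `n`
rotations of `π` have a cyclic descent at the last position, so averaging over rotations turns the
total variation distance into the mean of `cd(π) (n - cd(π)) / (n k)` under `C`.

Hockey-stick summation in `k` writes the polynomial `c (n - c)` times the binomial weight of `C`
as a combination of the same weights for all `j ≤ k`. The total of the weights over all permutations
is Worpitzky's `n j ^ (n - 1)`, so the mean is a combination of power sums, and Faulhaber's formula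
converts these into Bernoulli numbers.
-/

open Equiv Finset

theorem card_nsmul_sum_filter_mem_of_equivariant {G X M : Type*} [AddGroup G] [Fintype G]
    [DecidableEq G] [Fintype X] [AddCommMonoid M] (r : G → Perm X) (A : X → Finset G) (F : X → M)
    (hA : ∀ j x i, i ∈ A (r j x) ↔ i + j ∈ A x) (hF : ∀ j x, F (r j x) = F x) (a : G) :
    Fintype.card G • ∑ x with a ∈ A x, F x = ∑ x, #(A x) • F x := by
  have sum_mem (i : G) : ∑ x with i ∈ A x, F x = ∑ x with a ∈ A x, F x := by
    simp only [sum_filter]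
    refine Fintype.sum_equiv (r (-a + i)) _ _ fun x => ?_
    simp only [hA, hF, add_neg_cancel_left]
  calc Fintype.card G • ∑ x with a ∈ A x, F x
      = ∑ i, ∑ x with i ∈ A x, F x := by simp only [sum_mem, sum_const, card_univ]
    _ = ∑ x, ∑ i with i ∈ A x, F x := by simp only [sum_filter, sum_comm (γ := X)]
    _ = ∑ x, #(A x) • F x := by simp only [sum_const, filter_mem_eq_inter, univ_inter]

section CyclicDescents

/-- The cyclic descents of `π`: the positions `i` with `π i > π (i + 1)`, where addition in `Fin n`
wraps around, so that the last position is compared with the first. It makes the invariance of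
cyclic descents under rotation of the positions visible. -/
def cyclicDescentSet {n : ℕ} [NeZero n] (π : Perm (Fin n)) : Finset (Fin n) :=
  {i | π (i + 1) < π i}

theorem mem_cyclicDescentSet {n : ℕ} [NeZero n] {π : Perm (Fin n)} {i : Fin n} :
    i ∈ cyclicDescentSet π ↔ π (i + 1) < π i := by
  simp [cyclicDescentSet]

theorem mem_cyclicDescentSet_mul_addRight {n : ℕ} [NeZero n] {π : Perm (Fin n)} {i j : Fin n} :
    i ∈ cyclicDescentSet (π * Equiv.addRight j) ↔ i + j ∈ cyclicDescentSet π := by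
  simp only [mem_cyclicDescentSet, Perm.mul_apply, Equiv.coe_addRight, add_right_comm]

theorem card_cyclicDescentSet_mul_addRight {n : ℕ} [NeZero n] (π : Perm (Fin n)) (j : Fin n) :
    #(cyclicDescentSet (π * Equiv.addRight j)) = #(cyclicDescentSet π) :=
  card_equiv (Equiv.addRight j) fun _ => mem_cyclicDescentSet_mul_addRight

theorem card_cyclicDescentSet_lt {n : ℕ} [NeZero n] (π : Perm (Fin n)) :
    #(cyclicDescentSet π) < n := by
  have not_mem : π.symm 0 ∉ cyclicDescentSet π := by simp [mem_cyclicDescentSet]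
  simpa using card_lt_univ_of_notMem not_mem

variable {m : ℕ}

theorem numDescents_eq_card (π : Perm (Fin (m + 1))) :
    numDescents (m + 1) π = #{i : Fin m | π i.succ < π i.castSucc} := by
  rw [numDescents, card_filter, card_filter, Nat.add_sub_cancel, sum_range]
  refine sum_congr rfl fun i _ => if_congr ?_ rfl rfl
  exact ⟨fun ⟨_, h⟩ => h, fun h => ⟨Nat.succ_lt_succ i.2, h⟩⟩

theorem last_mem_cyclicDescentSet {π : Perm (Fin (m + 1))} :
    Fin.last m ∈ cyclicDescentSet π ↔ hasCyclicDescentAtLast (m + 1) π := by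
  rw [mem_cyclicDescentSet, Fin.last_add_one]
  exact ⟨fun h => ⟨m.succ_pos, h⟩, fun ⟨_, h⟩ => h⟩

theorem numCyclicDescents_eq_card (π : Perm (Fin (m + 1))) :
    numCyclicDescents (m + 1) π = #(cyclicDescentSet π) := by
  simp only [numCyclicDescents, numDescents_eq_card, ← last_mem_cyclicDescentSet,
    cyclicDescentSet, mem_filter_univ, card_filter, Fin.sum_univ_castSucc, Fin.coeSucc_eq_succ]

theorem numCyclicDescents_le (π : Perm (Fin (m + 1))) : numCyclicDescents (m + 1) π ≤ m :=
  numCyclicDescents_eq_card π ▸ Nat.lt_succ_iff.mp (card_cyclicDescentSet_lt π)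

theorem numCyclicDescents_mul_addRight (π : Perm (Fin (m + 1))) (j : Fin (m + 1)) :
    numCyclicDescents (m + 1) (π * Equiv.addRight j) = numCyclicDescents (m + 1) π := by
  simp only [numCyclicDescents_eq_card, card_cyclicDescentSet_mul_addRight]

theorem sum_filter_hasCyclicDescentAtLast {M : Type*} [AddCommMonoid M]
    (F : Perm (Fin (m + 1)) → M) (hF : ∀ j π, F (π * Equiv.addRight j) = F π) :
    (m + 1) • ∑ π with hasCyclicDescentAtLast (m + 1) π, F π
      = ∑ π, numCyclicDescents (m + 1) π • F π := by
  simpa [last_mem_cyclicDescentSet, numCyclicDescents_eq_card] using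
    card_nsmul_sum_filter_mem_of_equivariant (fun j => Equiv.mulRight (Equiv.addRight j))
      cyclicDescentSet F (fun _ _ _ => mem_cyclicDescentSet_mul_addRight) hF (Fin.last m)

theorem sum_filter_not_hasCyclicDescentAtLast {M : Type*} [AddCommMonoid M]
    (F : Perm (Fin (m + 1)) → M) (hF : ∀ j π, F (π * Equiv.addRight j) = F π) :
    (m + 1) • ∑ π with ¬hasCyclicDescentAtLast (m + 1) π, F π
      = ∑ π, (m + 1 - numCyclicDescents (m + 1) π) • F π := by
  simpa [last_mem_cyclicDescentSet, numCyclicDescents_eq_card, card_compl] using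
    card_nsmul_sum_filter_mem_of_equivariant (fun j => Equiv.mulRight (Equiv.addRight j))
      (fun π => (cyclicDescentSet π)ᶜ) F
      (fun _ _ _ => by simp [mem_cyclicDescentSet_mul_addRight]) hF (Fin.last m)

theorem numCyclicDescents_decomposeFin_symm_zero (σ : Perm (Fin (m + 1))) :
    numCyclicDescents (m + 2) (Perm.decomposeFin.symm (0, σ)) = numDescents (m + 1) σ + 1 := by
  have cyclic_descent : hasCyclicDescentAtLast (m + 2) (Perm.decomposeFin.symm (0, σ)) := by
    rw [← last_mem_cyclicDescentSet, mem_cyclicDescentSet, Fin.last_add_one, ← Fin.succ_last,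
      Perm.decomposeFin_symm_apply_succ]
    simp
  rw [numCyclicDescents, if_pos cyclic_descent, numDescents_eq_card, numDescents_eq_card,
    card_filter, card_filter, Fin.sum_univ_succ]
  simp only [Fin.castSucc_succ, Perm.decomposeFin_symm_apply_succ]
  simp

theorem sum_filter_apply_zero_eq_zero {M : Type*} [AddCommMonoid M] (F : Perm (Fin (m + 1)) → M) :
    ∑ π with π 0 = 0, F π = ∑ σ, F (Perm.decomposeFin.symm (0, σ)) := by
  rw [sum_filter, ← Equiv.sum_comp Perm.decomposeFin.symm, Fintype.sum_prod_type]
  simp [Perm.decomposeFin_symm_apply_zero]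

-- Exactly one rotation of `π` has the value `0` at position `0`; deleting that entry loses only the
-- cyclic descent at the last position.
theorem sum_comp_numCyclicDescents {M : Type*} [AddCommMonoid M] (f : ℕ → M) :
    ∑ π, f (numCyclicDescents (m + 2) π) = (m + 2) • ∑ σ, f (numDescents (m + 1) σ + 1) := by
  have rotate := card_nsmul_sum_filter_mem_of_equivariant
    (fun j => Equiv.mulRight (Equiv.addRight j)) (fun π : Perm (Fin (m + 2)) => {π.symm 0})
    (fun π => f (numCyclicDescents (m + 2) π))
    (fun j π i => by simp [Equiv.eq_symm_apply])
    (fun j π => by simp [numCyclicDescents_mul_addRight]) 0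
  simp only [mem_singleton, Equiv.eq_symm_apply, sum_filter_apply_zero_eq_zero,
    numCyclicDescents_decomposeFin_symm_zero, card_singleton, one_smul, Fintype.card_fin] at rotate
  exact rotate.symm

end CyclicDescents

section BinomialWeights

variable {R : Type*} [CommRing R] {m c k : ℕ}

theorem succ_mul_choose_add_sub_succ (hc : c ≤ m + k) :
    (m + 1 : R) * (m + k - c).choose (m + 1) = (m + k - c).choose m * (k - c) := by
  rcases le_or_gt c k with hck | hck
  · have := congrArg (Nat.cast (R := R)) (Nat.choose_succ_right_eq (m + k - c) m)
    rw [show m + k - c - m = k - c by omega] at this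
    push_cast [Nat.cast_sub hck] at this
    rw [mul_comm, this]
  · simp [Nat.choose_eq_zero_of_lt (show m + k - c < m by omega),
      Nat.choose_eq_zero_of_lt (show m + k - c < m + 1 by omega)]

theorem succ_mul_choose_add_succ_sub_succ (hc : c ≤ m + k) :
    (m + 1 : R) * (m + (k + 1) - c).choose (m + 1) = (m + k - c).choose m * (m + k + 1 - c) := by
  have := congrArg (Nat.cast (R := R)) (Nat.add_one_mul_choose_eq (m + k - c) m)
  rw [show m + k - c + 1 = m + (k + 1) - c by omega] at this
  push_cast [Nat.cast_sub (show c ≤ m + (k + 1) by omega)] at this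
  linear_combination -this

theorem choose_add_succ_sub_mul (hc : c ≤ m + k) :
    ((m + (k + 1) - c).choose m : R) * (k + 1 - c) = (m + k - c).choose m * (m + k + 1 - c) := by
  rw [← succ_mul_choose_add_succ_sub_succ hc, succ_mul_choose_add_sub_succ (k := k + 1) (by omega)]
  push_cast
  ring

theorem choose_sub_mul_eq_zero (hc : c ≤ m) : ((m - c).choose m : R) * c = 0 := by
  rcases c.eq_zero_or_pos with rfl | hpos
  · simp
  · simp [Nat.choose_eq_zero_of_lt (show m - c < m by omega)]

theorem succ_mul_sum_range_choose_add_sub (hc : c ≤ m) (k : ℕ) :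
    (m + 1 : R) * ∑ j ∈ range k, ((m + j - c).choose m : R)
      = (m + k - c).choose m * (k - c) := by
  induction k with
  | zero => simp [choose_sub_mul_eq_zero hc]
  | succ k ih =>
    have recurrence := choose_add_succ_sub_mul (R := R) (hc.trans (m.le_add_right k))
    rw [sum_range_succ, mul_add, ih]
    push_cast
    linear_combination -recurrence

theorem succ_mul_sum_range_mul_choose_add_sub (hc : c ≤ m) (k : ℕ) :
    (m + 1 : R) * (m + 2) * ∑ j ∈ range k, (j : R) * (m + j - c).choose m
      = (m + k - c).choose m * (k - c) * ((m + 1) * k - (m + 1) + c) := by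
  induction k with
  | zero =>
    simp only [range_zero, sum_empty, Nat.cast_zero, add_zero]
    linear_combination (c - m - 1 : R) * choose_sub_mul_eq_zero (R := R) hc
  | succ k ih =>
    have recurrence := choose_add_succ_sub_mul (R := R) (hc.trans (m.le_add_right k))
    rw [sum_range_succ, mul_add, ih]
    push_cast
    linear_combination (-((m + 1) * k + c) : R) * recurrence

theorem mul_sub_mul_choose_add_sub_eq_sum_range (hc : c ≤ m) (k : ℕ) :
    (c : R) * (m + 1 - c) * (m + k - c).choose m
      = ((m + 1) * k - k ^ 2) * (m + k - c).choose m
        + (m + 1) * (m + 2) * ∑ j ∈ range k, (j : R) * (m + j - c).choose m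
        - (m + 1) * m * k * ∑ j ∈ range k, ((m + j - c).choose m : R) := by
  linear_combination (m * k : R) * succ_mul_sum_range_choose_add_sub (R := R) hc k
    - succ_mul_sum_range_mul_choose_add_sub (R := R) hc k

end BinomialWeights

theorem succ_mul_choose_numDescents {m : ℕ} (k : ℕ) (π : Perm (Fin (m + 1))) :
    (m + 1 : ℝ) * (m + k - numDescents (m + 1) π).choose (m + 1)
      = (m + k - numCyclicDescents (m + 1) π).choose m
        * (k - numCyclicDescents (m + 1) π
          + if hasCyclicDescentAtLast (m + 1) π then (m + 1 : ℝ) else 0) := by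
  have hle := numCyclicDescents_le π
  split_ifs with h
  · have hd : numCyclicDescents (m + 1) π = numDescents (m + 1) π + 1 := by
      rw [numCyclicDescents, if_pos h]
    rw [show m + k - numDescents (m + 1) π = m + (k + 1) - numCyclicDescents (m + 1) π by omega,
      succ_mul_choose_add_succ_sub_succ (by omega)]
    ring
  · have hd : numCyclicDescents (m + 1) π = numDescents (m + 1) π := by
      rw [numCyclicDescents, if_neg h, add_zero]
    rw [← hd, succ_mul_choose_add_sub_succ (by omega), add_zero]

theorem succ_mul_sum_choose_numDescents (m k : ℕ) :
    (m + 1 : ℝ) * ∑ π, ((m + k - numDescents (m + 1) π).choose (m + 1) : ℝ)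
      = k * ∑ π, ((m + k - numCyclicDescents (m + 1) π).choose m : ℝ) := by
  have rotate : (m + 1 : ℝ) * ∑ π with hasCyclicDescentAtLast (m + 1) π,
        ((m + k - numCyclicDescents (m + 1) π).choose m : ℝ)
      = ∑ π, (numCyclicDescents (m + 1) π : ℝ)
        * (m + k - numCyclicDescents (m + 1) π).choose m := by
    simpa using sum_filter_hasCyclicDescentAtLast
      (fun π => ((m + k - numCyclicDescents (m + 1) π).choose m : ℝ))
      (fun j π => by rw [numCyclicDescents_mul_addRight])
  calc _ = ∑ π, ((m + k - numCyclicDescents (m + 1) π).choose m : ℝ)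
            * (k - numCyclicDescents (m + 1) π)
          + (m + 1) * ∑ π with hasCyclicDescentAtLast (m + 1) π,
            ((m + k - numCyclicDescents (m + 1) π).choose m : ℝ) := by
        rw [sum_filter, mul_sum, mul_sum, ← sum_add_distrib]
        refine sum_congr rfl fun π _ => ?_
        rw [succ_mul_choose_numDescents]
        split_ifs <;> ring
    _ = _ := by
        rw [rotate, ← sum_add_distrib, mul_sum]
        exact sum_congr rfl fun π _ => by ring

theorem sum_choose_numCyclicDescents (m k : ℕ) :
    ∑ π, ((m + k - numCyclicDescents (m + 1) π).choose m : ℝ) = (m + 1) * k ^ m := by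
  induction m with
  | zero => simp
  | succ m ih =>
    have worpitzky : ∑ σ, ((m + k - numDescents (m + 1) σ).choose (m + 1) : ℝ) = k ^ (m + 1) := by
      have hm : (m + 1 : ℝ) ≠ 0 := by positivity
      apply mul_left_cancel₀ hm
      rw [succ_mul_sum_choose_numDescents, ih]
      ring
    rw [sum_comp_numCyclicDescents fun c => ((m + 1 + k - c).choose (m + 1) : ℝ)]
    simp only [Nat.add_right_comm m 1 k, Nat.add_sub_add_right, worpitzky, nsmul_eq_mul]
    push_cast
    ring

theorem sum_numCyclicDescents_mul_sub_mul_choose (m k : ℕ) :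
    ∑ π, (numCyclicDescents (m + 1) π : ℝ) * (m + 1 - numCyclicDescents (m + 1) π)
        * (m + k - numCyclicDescents (m + 1) π).choose m
      = (m + 1) * (((m + 1) * k - k ^ 2) * k ^ m
        + (m + 1) * (m + 2) * ∑ j ∈ range k, (j : ℝ) ^ (m + 1)
        - (m + 1) * m * k * ∑ j ∈ range k, (j : ℝ) ^ m) := by
  simp only [mul_sub_mul_choose_add_sub_eq_sum_range (numCyclicDescents_le _), sum_sub_distrib,
    sum_add_distrib, ← mul_sum, sum_comm (s := univ), sum_choose_numCyclicDescents]
  have sum_mul_pow : ∑ j ∈ range k, (j : ℝ) * ((m + 1) * j ^ m)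
      = (m + 1) * ∑ j ∈ range k, (j : ℝ) ^ (m + 1) := by
    rw [mul_sum]
    exact sum_congr rfl fun j _ => by ring
  rw [sum_mul_pow]
  ring

section TotalVariation

variable {m k : ℕ}

theorem cutRiffle_succ (π : Perm (Fin (m + 1))) :
    cutRiffle k (m + 1) π
      = (m + k - numCyclicDescents (m + 1) π).choose m / ((m + 1) * (k : ℝ) ^ m) := by
  rw [cutRiffle, show m + 1 + k - numCyclicDescents (m + 1) π - 1
    = m + k - numCyclicDescents (m + 1) π by omega]
  simp

theorem cutRiffle_mul_addRight (π : Perm (Fin (m + 1))) (j : Fin (m + 1)) :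
    cutRiffle k (m + 1) (π * Equiv.addRight j) = cutRiffle k (m + 1) π := by
  simp only [cutRiffle, numCyclicDescents_mul_addRight]

theorem riffle_sub_cutRiffle (hk : k ≠ 0) (π : Perm (Fin (m + 1))) :
    riffle k (m + 1) π - cutRiffle k (m + 1) π
      = ((if hasCyclicDescentAtLast (m + 1) π then (m + 1 : ℝ) else 0)
          - numCyclicDescents (m + 1) π) * cutRiffle k (m + 1) π / k := by
  have hk' : (k : ℝ) ≠ 0 := Nat.cast_ne_zero.mpr hk
  have hm : (m + 1 : ℝ) ≠ 0 := by positivity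
  have pascal := succ_mul_choose_numDescents k π
  rw [riffle, show m + 1 + k - numDescents (m + 1) π - 1 = m + k - numDescents (m + 1) π by omega,
    cutRiffle_succ]
  field_simp
  linear_combination k * k ^ m * pascal

theorem abs_riffle_sub_cutRiffle (hk : k ≠ 0) (π : Perm (Fin (m + 1))) :
    |riffle k (m + 1) π - cutRiffle k (m + 1) π|
      = (if hasCyclicDescentAtLast (m + 1) π
          then (m + 1 - numCyclicDescents (m + 1) π) * cutRiffle k (m + 1) π
          else numCyclicDescents (m + 1) π * cutRiffle k (m + 1) π) / k := by
  have cutRiffle_nonneg : 0 ≤ cutRiffle k (m + 1) π := by rw [cutRiffle]; positivity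
  have hle : (numCyclicDescents (m + 1) π : ℝ) ≤ m := mod_cast numCyclicDescents_le π
  rw [riffle_sub_cutRiffle hk, abs_div, abs_mul, abs_of_nonneg cutRiffle_nonneg, Nat.abs_cast]
  split_ifs
  · rw [abs_of_nonneg (by linarith)]
  · rw [zero_sub, abs_neg, Nat.abs_cast]

theorem half_mul_sum_abs_riffle_sub_cutRiffle (hk : k ≠ 0) :
    (1 / 2) * ∑ π, |riffle k (m + 1) π - cutRiffle k (m + 1) π|
      = (∑ π, (numCyclicDescents (m + 1) π : ℝ) * (m + 1 - numCyclicDescents (m + 1) π)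
          * cutRiffle k (m + 1) π) / ((m + 1) * k) := by
  have with_descent := sum_filter_hasCyclicDescentAtLast
    (fun π => (m + 1 - numCyclicDescents (m + 1) π) * cutRiffle k (m + 1) π)
    (fun j π => by rw [numCyclicDescents_mul_addRight, cutRiffle_mul_addRight])
  have without_descent := sum_filter_not_hasCyclicDescentAtLast
    (fun π => numCyclicDescents (m + 1) π * cutRiffle k (m + 1) π)
    (fun j π => by rw [numCyclicDescents_mul_addRight, cutRiffle_mul_addRight])
  have cast_sub (π : Perm (Fin (m + 1))) : ((m + 1 - numCyclicDescents (m + 1) π : ℕ) : ℝ)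
      = m + 1 - numCyclicDescents (m + 1) π := by
    rw [Nat.cast_sub ((numCyclicDescents_le π).trans m.le_succ)]
    push_cast
    rfl
  simp only [nsmul_eq_mul, cast_sub, Nat.cast_succ, ← mul_assoc] at with_descent without_descent
  simp only [mul_comm _ (numCyclicDescents (m + 1) _ : ℝ)] at without_descent
  simp only [abs_riffle_sub_cutRiffle hk, ← sum_div, sum_ite]
  have hm : (m + 1 : ℝ) ≠ 0 := by positivity
  field_simp
  linear_combination with_descent + without_descent

theorem half_mul_sum_abs_riffle_sub_cutRiffle_eq_sum_range_pow (hk : k ≠ 0) :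
    (1 / 2) * ∑ π, |riffle k (m + 1) π - cutRiffle k (m + 1) π|
      = 1 - k / (m + 1) + (m + 2) * (∑ j ∈ range k, (j : ℝ) ^ (m + 1)) / k ^ (m + 1)
        - m * (∑ j ∈ range k, (j : ℝ) ^ m) / k ^ m := by
  have hk' : (k : ℝ) ≠ 0 := Nat.cast_ne_zero.mpr hk
  have hm : (m + 1 : ℝ) ≠ 0 := by positivity
  rw [half_mul_sum_abs_riffle_sub_cutRiffle hk]
  simp only [cutRiffle_succ, ← mul_div_assoc, ← sum_div,
    sum_numCyclicDescents_mul_sub_mul_choose]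
  field_simp
  ring

end TotalVariation

theorem succ_mul_sum_range_pow_div_pow (p : ℕ) {k : ℕ} (hk : k ≠ 0) :
    (p + 1) * (∑ j ∈ range k, (j : ℝ) ^ p) / k ^ p
      = k + ∑ t ∈ range p, (bernoulli (t + 1) : ℝ) / k ^ t * (p + 1).choose (t + 1) := by
  have hk' : (k : ℝ) ≠ 0 := Nat.cast_ne_zero.mpr hk
  have faulhaber : (∑ j ∈ range k, (j : ℝ) ^ p) = ∑ i ∈ range (p + 1),
      (bernoulli i : ℝ) * (p + 1).choose i * k ^ (p + 1 - i) / (p + 1) :=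
    mod_cast congrArg (Rat.cast (K := ℝ)) (sum_range_pow k p)
  have hp : (p + 1 : ℝ) ≠ 0 := by positivity
  rw [faulhaber, ← sum_div, mul_div_cancel₀ _ hp, sum_range_succ', add_div, sum_div, add_comm]
  congr 1
  · simp [pow_succ, hk']
  · refine sum_congr rfl fun t ht => ?_
    have pow_split : (k : ℝ) ^ p = k ^ (p - t) * k ^ t := by
      rw [← pow_add, Nat.sub_add_cancel (mem_range.mp ht).le]
    rw [Nat.add_sub_add_right, pow_split]
    field_simp

theorem descFactorial_div_factorial_add (m t : ℕ) :
    ((m + 1).descFactorial t : ℝ) / t.factorial + (m.descFactorial t : ℝ) / (t + 1).factorial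
      = (m + 2).choose (t + 1) - m / (m + 1) * (m + 1).choose (t + 1) := by
  have absorption : (m + 1 : ℝ) * m.choose t = (m + 1).choose (t + 1) * (t + 1) :=
    mod_cast Nat.add_one_mul_choose_eq m t
  rw [Nat.choose_succ_succ' (m + 1) t, Nat.descFactorial_eq_factorial_mul_choose,
    Nat.descFactorial_eq_factorial_mul_choose, Nat.factorial_succ]
  have hm : (m + 1 : ℝ) ≠ 0 := by positivity
  push_cast
  field_simp
  linear_combination absorption

theorem half_mul_sum_abs_riffle_sub_cutRiffle_eq_one_add_sum_bernoulli {k : ℕ} (m : ℕ)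
    (hk : k ≠ 0) :
    (1 / 2) * ∑ π, |riffle k (m + 1) π - cutRiffle k (m + 1) π|
      = 1 + ∑ t ∈ range m, (bernoulli (t + 1) : ℝ) / k ^ t
          * ((m + 2).choose (t + 1) - m / (m + 1) * (m + 1).choose (t + 1))
        + (m + 2) * bernoulli (m + 1) / k ^ m := by
  have hm : (m + 1 : ℝ) ≠ 0 := by positivity
  have upper := succ_mul_sum_range_pow_div_pow (m + 1) hk
  have lower : m * (∑ j ∈ range k, (j : ℝ) ^ m) / k ^ m = m / (m + 1)
      * (k + ∑ t ∈ range m, (bernoulli (t + 1) : ℝ) / k ^ t * (m + 1).choose (t + 1)) := by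
    rw [← succ_mul_sum_range_pow_div_pow m hk]
    field_simp
  rw [sum_range_succ, Nat.choose_succ_self_right] at upper
  push_cast at upper
  have coefficients : ∑ t ∈ range m, (bernoulli (t + 1) : ℝ) / k ^ t
        * ((m + 2).choose (t + 1) - m / (m + 1) * (m + 1).choose (t + 1))
      = ∑ t ∈ range m, (bernoulli (t + 1) : ℝ) / k ^ t * (m + 2).choose (t + 1)
        - m / (m + 1) * ∑ t ∈ range m, (bernoulli (t + 1) : ℝ) / k ^ t
          * (m + 1).choose (t + 1) := by
    rw [mul_sum, ← sum_sub_distrib]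
    exact sum_congr rfl fun t _ => by ring
  rw [half_mul_sum_abs_riffle_sub_cutRiffle_eq_sum_range_pow hk, coefficients]
  have main_terms : (k : ℝ) - k / (m + 1) = m / (m + 1) * k := by
    field_simp
    ring
  linear_combination upper - lower + main_terms

/-- total variation distance between `R_{k,n}` and `C_{k,n}`, third form,
in terms of Bernoulli numbers (convention `B₁ = -1/2`) and falling factorials. -/
theorem totalVariation_riffle_cutRiffle_eq_bernoulli (n k : ℕ) (hn : 2 ≤ n) (hk : 1 ≤ k) :
    (1 / 2) * ∑ π : Equiv.Perm (Fin n), |riffle k n π - cutRiffle k n π|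
      = (∑ t ∈ Finset.Icc 1 (n - 2),
          ((bernoulli (t + 1) : ℝ) / (k : ℝ) ^ t)
            * ((Nat.descFactorial n t : ℝ) / (Nat.factorial t : ℝ)
                + (Nat.descFactorial (n - 1) t : ℝ) / (Nat.factorial (t + 1) : ℝ)))
        + ((n : ℝ) + 1) * (bernoulli n : ℝ) / (k : ℝ) ^ (n - 1) := by
  obtain ⟨m, rfl⟩ : ∃ m, n = m + 2 := ⟨n - 2, by omega⟩
  rw [half_mul_sum_abs_riffle_sub_cutRiffle_eq_one_add_sum_bernoulli (m + 1) (by omega),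
    range_eq_Ico, sum_eq_sum_Ico_succ_bot m.succ_pos]
  simp only [← descFactorial_div_factorial_add]
  have index_set : Ico (0 + 1) (m + 1) = Icc 1 (m + 2 - 2) := rfl
  have first_term : (bernoulli (0 + 1) : ℝ) / k ^ 0
      * ((m + 1 + 1).descFactorial 0 / (Nat.factorial 0)
        + (m + 1).descFactorial 0 / (0 + 1).factorial) = -1 := by norm_num [bernoulli_one]
  rw [index_set, first_term]
  push_cast
  ring
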